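/- Let m be a positive integer and let φ : ℝ² → ℝ be positively homogeneous of degree m and Lipschitz on the closed unit ball. Set Φ(t) = φ(cos t, sin t) for t ∈ [0, 2π]. Then φ is representable as a difference of two convex functions if and only if there exists a constant c(φ) > 0 such that ∨(Φ'; 0, 2π) < c(φ). -/

import Mathlib

/-! Write `Φ t = φ (cos t, sin t)`.

If `φ = f₁ - f₂` with `f₁`, `f₂` convex, each `fᵢ` is Lipschitz on the unit disc and the circle
deviates from its chords by `O(|t - s| ^ 2)`, so `fᵢ (cos t, sin t) + K t ^ 2` is convex in `t` for
large `K` (`exists_convexOn_comp_circlePt`). Hence `Φ` is a difference of convex functions of `t`,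
and `Φ'`, where it exists, is a difference of the increasing right derivatives, so that its
variation telescopes (`derivVariation_sub_le`).

Conversely, if the variation is finite, then `t ↦ ∨(Φ'; 0, t)` gives a Jordan decomposition
`Φ' = p - q` on `[0, 2π]` with `p`, `q` increasing (`exists_monotone_sub_of_derivVariation`).
Subtracting from each the same suitable linear function and a mean value, extending periodically
(`periodize`) and integrating yields `2π`-periodic functions `A`, `B` with `Φ = A - B`, both
semiconvex: at every `α` they lie above a parabola touching at `α`. Since `1 - cos τ` is bounded
below by a multiple of `τ ^ 2` on `[-π, π]`, for a large constant `C` such a support turns into a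
linear support of `q ↦ ‖q‖ (A θ + C)` (`trig_support`), which is therefore convex and nonnegative
(`convexOn_norm_mul`); the same holds for `B`. So `‖q‖ Φ θ` is a difference `F - G` of nonnegative
convex functions, and `φ = ‖q‖ ^ (m - 1) (F - G)` is a difference of convex functions because a
product of nonnegative convex functions is one: `f g = ((f + g) ^ 2 - (f ^ 2 + g ^ 2)) / 2`
(`dc_mul_sub`). -/

open Set
open scoped ENNReal NNReal

noncomputable section

/-- Variation of the derivative of `f` on `[a,b]`: supremum, over finite increasing
sequences of points of `[a,b]` at which `f` is differentiable, of the sums of norms of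
consecutive differences of derivatives. -/
def derivVariation {E : Type*} [NormedAddCommGroup E] [NormedSpace ℝ E]
    (f : ℝ → E) (a b : ℝ) : ℝ≥0∞ :=
  ⨆ (N : ℕ) (t : Fin (N + 1) → ℝ) (_ : StrictMono t)
    (_ : ∀ i, t i ∈ Set.Icc a b ∧ DifferentiableAt ℝ f (t i)),
    ∑ i : Fin N, ENNReal.ofReal ‖deriv f (t i.succ) - deriv f (t i.castSucc)‖

/-- The point `(cos t, sin t)` on the unit circle of the Euclidean plane. -/
def circlePt (t : ℝ) : EuclideanSpace ℝ (Fin 2) :=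
  (WithLp.equiv 2 (Fin 2 → ℝ)).symm ![Real.cos t, Real.sin t]

/-! ### Convex functions restricted to the circle -/

theorem circlePt_zero (t : ℝ) : circlePt t 0 = Real.cos t := rfl
theorem circlePt_one (t : ℝ) : circlePt t 1 = Real.sin t := rfl

theorem norm_circlePt (t : ℝ) : ‖circlePt t‖ = 1 := by
  simp [EuclideanSpace.norm_eq, Fin.sum_univ_two, circlePt_zero, circlePt_one]

theorem norm_le_abs_add_abs (x : EuclideanSpace ℝ (Fin 2)) : ‖x‖ ≤ |x 0| + |x 1| := by
  rw [EuclideanSpace.norm_eq, Fin.sum_univ_two]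
  refine Real.sqrt_le_iff.2 ⟨by positivity, ?_⟩
  simp only [Real.norm_eq_abs]
  nlinarith [abs_nonneg (x 0), abs_nonneg (x 1), mul_nonneg (abs_nonneg (x 0)) (abs_nonneg (x 1))]

/-- A function that is both semiconvex and semiconcave with constant `1` deviates from its chords
by no more than the parabola `t ^ 2 / 2` does. -/
theorem abs_chord_le {c : ℝ → ℝ} (h₁ : ConvexOn ℝ univ fun t => t ^ 2 / 2 + c t)
    (h₂ : ConvexOn ℝ univ fun t => t ^ 2 / 2 - c t) {a b : ℝ} (ha : 0 ≤ a) (hb : 0 ≤ b)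
    (hab : a + b = 1) (s t : ℝ) :
    |c (a * s + b * t) - (a * c s + b * c t)| ≤
      a * (s ^ 2 / 2) + b * (t ^ 2 / 2) - (a * s + b * t) ^ 2 / 2 := by
  have e₁ := h₁.2 (mem_univ s) (mem_univ t) ha hb hab
  have e₂ := h₂.2 (mem_univ s) (mem_univ t) ha hb hab
  simp only [smul_eq_mul] at e₁ e₂
  rw [abs_le]
  constructor <;> linarith

theorem cos_chord {a b : ℝ} (ha : 0 ≤ a) (hb : 0 ≤ b) (hab : a + b = 1) (s t : ℝ) :
    |Real.cos (a * s + b * t) - (a * Real.cos s + b * Real.cos t)| ≤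
      a * (s ^ 2 / 2) + b * (t ^ 2 / 2) - (a * s + b * t) ^ 2 / 2 := by
  have d₁ : ∀ x : ℝ, HasDerivAt (fun t : ℝ => t ^ 2 / 2 + Real.cos t) (x - Real.sin x) x := by
    intro x
    exact (((hasDerivAt_pow 2 x).div_const 2).add (Real.hasDerivAt_cos x)).congr_deriv
      (by norm_num; ring)
  have d₂ : ∀ x : ℝ, HasDerivAt (fun t : ℝ => t ^ 2 / 2 - Real.cos t) (x + Real.sin x) x := by
    intro x
    exact (((hasDerivAt_pow 2 x).div_const 2).sub (Real.hasDerivAt_cos x)).congr_deriv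
      (by norm_num)
  have m₁ : Monotone fun x : ℝ => x - Real.sin x := by
    intro x y hxy
    have := (abs_le.1 (Real.abs_sin_sub_sin_le y x)).2
    rw [abs_of_nonneg (by linarith)] at this
    simp only; linarith
  have m₂ : Monotone fun x : ℝ => x + Real.sin x := by
    intro x y hxy
    have := (abs_le.1 (Real.abs_sin_sub_sin_le y x)).1
    rw [abs_of_nonneg (by linarith)] at this
    simp only; linarith
  refine abs_chord_le ?_ ?_ ha hb hab s t
  · refine Monotone.convexOn_univ_of_deriv (fun x => (d₁ x).differentiableAt) ?_
    rw [show deriv (fun t : ℝ => t ^ 2 / 2 + Real.cos t) = _ from funext fun x => (d₁ x).deriv]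
    exact m₁
  · refine Monotone.convexOn_univ_of_deriv (fun x => (d₂ x).differentiableAt) ?_
    rw [show deriv (fun t : ℝ => t ^ 2 / 2 - Real.cos t) = _ from funext fun x => (d₂ x).deriv]
    exact m₂

theorem sin_chord {a b : ℝ} (ha : 0 ≤ a) (hb : 0 ≤ b) (hab : a + b = 1) (s t : ℝ) :
    |Real.sin (a * s + b * t) - (a * Real.sin s + b * Real.sin t)| ≤
      a * (s ^ 2 / 2) + b * (t ^ 2 / 2) - (a * s + b * t) ^ 2 / 2 := by
  -- `sin u = cos (u - π / 2)`, and the right-hand side is invariant under translation.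
  have h := cos_chord ha hb hab (s - Real.pi / 2) (t - Real.pi / 2)
  have e : a * (s - Real.pi / 2) + b * (t - Real.pi / 2) = a * s + b * t - Real.pi / 2 := by
    linear_combination (-Real.pi / 2) * hab
  rw [e] at h
  simp only [Real.cos_sub_pi_div_two] at h
  refine h.trans (le_of_eq ?_)
  obtain rfl : b = 1 - a := by linarith
  ring

/-- A convex function on the plane, restricted to the unit circle, is semiconvex in the angle:
it is Lipschitz on the disc, and an arc deviates from its chord only to second order. -/
theorem exists_convexOn_comp_circlePt {f : EuclideanSpace ℝ (Fin 2) → ℝ}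
    (hf : ConvexOn ℝ univ f) :
    ∃ K : ℝ, ∀ K', K ≤ K' → ConvexOn ℝ univ fun t => f (circlePt t) + K' * t ^ 2 := by
  obtain ⟨L, hL⟩ := LocallyLipschitzOn.exists_lipschitzOnWith_of_compact
    (isCompact_closedBall (0 : EuclideanSpace ℝ (Fin 2)) 1)
    (hf.locallyLipschitz.locallyLipschitzOn (s := Metric.closedBall 0 1))
  refine ⟨L, fun K' hK' => ⟨convex_univ, fun s _ t _ a b ha hb hab => ?_⟩⟩
  simp only [smul_eq_mul]
  have hmem : ∀ u, circlePt u ∈ Metric.closedBall (0 : EuclideanSpace ℝ (Fin 2)) 1 := fun u => by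
    simp [norm_circlePt]
  have hc : a • circlePt s + b • circlePt t ∈
      Metric.closedBall (0 : EuclideanSpace ℝ (Fin 2)) 1 :=
    convex_closedBall _ _ (hmem s) (hmem t) ha hb hab
  have h1 := hL.dist_le_mul _ (hmem (a * s + b * t)) _ hc
  have h2 := hf.2 (mem_univ (circlePt s)) (mem_univ (circlePt t)) ha hb hab
  simp only [smul_eq_mul] at h2
  set D := a * (s ^ 2 / 2) + b * (t ^ 2 / 2) - (a * s + b * t) ^ 2 / 2 with hD
  have h3 : dist (circlePt (a * s + b * t)) (a • circlePt s + b • circlePt t) ≤ 2 * D := by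
    rw [dist_eq_norm]
    refine (norm_le_abs_add_abs _).trans ?_
    have e₁ := cos_chord ha hb hab s t
    have e₂ := sin_chord ha hb hab s t
    simp only [PiLp.sub_apply, PiLp.add_apply, PiLp.smul_apply, circlePt_zero, circlePt_one,
      smul_eq_mul]
    linarith
  have hD0 : 0 ≤ D := by linarith [dist_nonneg.trans h3]
  have h4 : f (circlePt (a * s + b * t)) ≤ f (a • circlePt s + b • circlePt t) + L * (2 * D) := by
    have := (abs_le.1 (Real.dist_eq _ _ ▸ h1)).2
    have := mul_le_mul_of_nonneg_left h3 L.2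
    linarith!
  have h5 : (L : ℝ) * (2 * D) ≤ K' * (2 * D) := by gcongr
  have h6 : K' * (2 * D) = a * (K' * s ^ 2) + b * (K' * t ^ 2) - K' * (a * s + b * t) ^ 2 := by
    rw [hD]; ring
  linarith

/-- A difference of convex functions on `ℝ` has a derivative of finite variation, because the
one-sided derivatives of convex functions are monotone. -/
theorem derivVariation_sub_le {Φ h₁ h₂ : ℝ → ℝ} (c₁ : ConvexOn ℝ univ h₁)
    (c₂ : ConvexOn ℝ univ h₂) (hΦ : ∀ t, Φ t = h₁ t - h₂ t) (a b : ℝ) :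
    ∃ C : ℝ, derivVariation Φ a b ≤ ENNReal.ofReal C := by
  set r : ℝ → ℝ := fun x => derivWithin h₁ (Ioi x) x with hr
  set l : ℝ → ℝ := fun x => derivWithin h₂ (Ioi x) x with hl
  have mr : Monotone r := by simpa using c₁.monotoneOn_rightDeriv
  have ml : Monotone l := by simpa using c₂.monotoneOn_rightDeriv
  have key : ∀ t, DifferentiableAt ℝ Φ t → deriv Φ t = r t - l t := by
    intro t ht
    have e := (c₁.hasDerivWithinAt_rightDeriv_of_mem_interior (x := t) (by simp)).sub
      (c₂.hasDerivWithinAt_rightDeriv_of_mem_interior (x := t) (by simp))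
    have e' : HasDerivWithinAt Φ (deriv Φ t) (Ioi t) t := ht.hasDerivAt.hasDerivWithinAt
    have : h₁ - h₂ = Φ := by funext x; simp [hΦ]
    rw [this] at e
    exact (uniqueDiffWithinAt_Ioi t).eq_deriv _ e' e
  refine ⟨(r b + l b) - (r a + l a), ?_⟩
  refine iSup_le fun N => iSup_le fun t => iSup_le fun ht => iSup_le fun htm => ?_
  have step : ∀ i : Fin N, ENNReal.ofReal ‖deriv Φ (t i.succ) - deriv Φ (t i.castSucc)‖ ≤
      ENNReal.ofReal ((r (t i.succ) + l (t i.succ)) - (r (t i.castSucc) + l (t i.castSucc))) := by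
    intro i
    apply ENNReal.ofReal_le_ofReal
    have hlt := (ht (Fin.castSucc_lt_succ (i := i))).le
    have := mr hlt
    have := ml hlt
    rw [key _ (htm _).2, key _ (htm _).2, Real.norm_eq_abs, abs_le]
    constructor <;> linarith
  refine (Finset.sum_le_sum fun i _ => step i).trans ?_
  rw [← ENNReal.ofReal_sum_of_nonneg]
  · apply ENNReal.ofReal_le_ofReal
    have tel : ∀ (n : ℕ) (u : Fin (n + 1) → ℝ),
        ∑ i : Fin n, (u i.succ - u i.castSucc) = u (Fin.last n) - u 0 := by
      intro n
      induction n with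
      | zero => intro u; simp
      | succ n ih =>
        intro u
        rw [Fin.sum_univ_castSucc]
        have := ih (fun i => u i.castSucc)
        simp only [Fin.succ_castSucc, Fin.succ_last, Fin.castSucc_zero] at this ⊢
        rw [this]; ring
    rw [tel N fun i => r (t i) + l (t i)]
    have := mr (htm (Fin.last N)).1.2
    have := ml (htm (Fin.last N)).1.2
    have := mr (htm 0).1.1
    have := ml (htm 0).1.1
    linarith
  · intro i _
    have hlt := (ht (Fin.castSucc_lt_succ (i := i))).le
    have := mr hlt
    have := ml hlt
    linarith


/-! ### Convexity of positively homogeneous functions from their angular part -/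

/-- The polar angle, in `(-π, π]`, of a point of the plane. -/
def polarAngle (q : EuclideanSpace ℝ (Fin 2)) : ℝ := Complex.arg ⟨q 0, q 1⟩

theorem norm_smul_circlePt_polarAngle (q : EuclideanSpace ℝ (Fin 2)) :
    ‖q‖ • circlePt (polarAngle q) = q := by
  have hn : ‖(⟨q 0, q 1⟩ : ℂ)‖ = ‖q‖ := by
    rw [EuclideanSpace.norm_eq, Fin.sum_univ_two, Complex.norm_def, Complex.normSq_mk]
    simp [sq]
  ext i
  fin_cases i
  · simpa [hn, circlePt_zero, polarAngle] using Complex.norm_mul_cos_arg ⟨q 0, q 1⟩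
  · simpa [hn, circlePt_one, polarAngle] using Complex.norm_mul_sin_arg ⟨q 0, q 1⟩

/-- The trigonometric inequality behind the convexity of `q ↦ ‖q‖ (A θ + C)`: a parabolic support
of `A` at `α` becomes, once `C` is large, a support by a function `θ ↦ ⟨p, (cos θ, sin θ)⟩`. -/
theorem trig_support {A : ℝ → ℝ} (hper : Function.Periodic A (2 * Real.pi)) {L K C α s : ℝ}
    (hL : 0 ≤ L) (hK : 0 ≤ K) (hAL : |A α| ≤ L) (hs : |s| ≤ L)
    (hsup : ∀ t, A α + s * (t - α) - K * (t - α) ^ 2 ≤ A t) (hC : L + 5 * (K + L) ≤ C) (β : ℝ) :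
    (A α + C) * Real.cos (β - α) + s * Real.sin (β - α) ≤ A β + C := by
  have hpi := Real.pi_pos
  set k : ℤ := round ((β - α) / (2 * Real.pi))
  set τ : ℝ := β - α - k * (2 * Real.pi) with hτ
  have hτπ : |τ| ≤ Real.pi := by
    have h := abs_sub_round ((β - α) / (2 * Real.pi))
    have e : τ = ((β - α) / (2 * Real.pi) - k) * (2 * Real.pi) := by
      rw [hτ]; field_simp
    rw [e, abs_mul, abs_of_pos (by positivity : 0 < 2 * Real.pi)]
    nlinarith
  have e1 : Real.cos (β - α) = Real.cos τ := (Real.cos_periodic.sub_int_mul_eq k).symm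
  have e2 : Real.sin (β - α) = Real.sin τ := (Real.sin_periodic.sub_int_mul_eq k).symm
  have e3 : A β = A (α + τ) := by
    rw [← hper.sub_int_mul_eq k, hτ]; ring_nf
  rw [e1, e2, e3]
  have h1 := hsup (α + τ)
  rw [add_sub_cancel_left] at h1
  have h2 : τ ^ 2 / 5 ≤ 1 - Real.cos τ := by
    have h := Real.cos_le_one_sub_mul_cos_sq hτπ
    have : (1 : ℝ) / 5 ≤ 2 / Real.pi ^ 2 := by
      rw [div_le_div_iff₀ (by norm_num) (by positivity)]
      nlinarith [Real.pi_lt_d2]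
    nlinarith [sq_nonneg τ, mul_le_mul_of_nonneg_right this (sq_nonneg τ)]
  have h3 : |τ - Real.sin τ| ≤ τ ^ 2 := by
    refine (Real.abs_sub_sin_le τ).trans ?_
    have : |τ| ^ 3 = |τ| * τ ^ 2 := by rw [← sq_abs τ]; ring
    rw [this]
    nlinarith [sq_nonneg τ, Real.pi_lt_d2, abs_nonneg τ,
      mul_le_mul_of_nonneg_right hτπ (sq_nonneg τ)]
  have h4 : |s * (τ - Real.sin τ)| ≤ L * τ ^ 2 := by
    rw [abs_mul]; gcongr
  have h5 : 5 * (K + L) * (τ ^ 2 / 5) ≤ (A α + C) * (1 - Real.cos τ) := by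
    have := (abs_le.1 hAL).1
    apply mul_le_mul _ h2 (by positivity)
    · linarith [add_nonneg hK hL]
    · linarith
  have := (abs_le.1 h4).1
  nlinarith

/-- A function admitting a supporting linear functional at each point is convex. -/
theorem convexOn_of_linear_support {E : Type*} [AddCommGroup E] [Module ℝ E] {f : E → ℝ}
    (h : ∀ z, ∃ ℓ : E →ₗ[ℝ] ℝ, ℓ z = f z ∧ ∀ w, ℓ w ≤ f w) : ConvexOn ℝ univ f := by
  refine ⟨convex_univ, fun x _ y _ a b ha hb _ => ?_⟩
  obtain ⟨ℓ, h₁, h₂⟩ := h (a • x + b • y)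
  rw [← h₁, map_add, map_smul, map_smul]
  simp only [smul_eq_mul]
  have := mul_le_mul_of_nonneg_left (h₂ x) ha
  have := mul_le_mul_of_nonneg_left (h₂ y) hb
  linarith

/-- If a bounded `2π`-periodic function `A` is semiconvex, then the positively `1`-homogeneous
function with angular part `A + C` is convex on the plane, for all large `C`. -/
theorem convexOn_norm_mul {A : ℝ → ℝ} (hper : Function.Periodic A (2 * Real.pi)) {L K : ℝ}
    (hL : 0 ≤ L) (hK : 0 ≤ K) (hAL : ∀ α, |A α| ≤ L)
    (hsup : ∀ α, ∃ s, |s| ≤ L ∧ ∀ t, A α + s * (t - α) - K * (t - α) ^ 2 ≤ A t)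
    {C : ℝ} (hC : L + 5 * (K + L) ≤ C) :
    ConvexOn ℝ univ (fun q => ‖q‖ * (A (polarAngle q) + C)) ∧
      ∀ q : EuclideanSpace ℝ (Fin 2), 0 ≤ ‖q‖ * (A (polarAngle q) + C) := by
  refine ⟨convexOn_of_linear_support fun z => ?_, fun q => ?_⟩
  · set α := polarAngle z
    obtain ⟨s, hs, hsup⟩ := hsup α
    let x₀ : EuclideanSpace ℝ (Fin 2) →ₗ[ℝ] ℝ := (EuclideanSpace.proj (𝕜 := ℝ) 0).toLinearMap
    let x₁ : EuclideanSpace ℝ (Fin 2) →ₗ[ℝ] ℝ := (EuclideanSpace.proj (𝕜 := ℝ) 1).toLinearMap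
    let ℓ : EuclideanSpace ℝ (Fin 2) →ₗ[ℝ] ℝ :=
      (A α + C) • (Real.cos α • x₀ + Real.sin α • x₁) + s • (Real.cos α • x₁ - Real.sin α • x₀)
    have hℓ : ∀ w, ℓ w = ‖w‖ * ((A α + C) * Real.cos (polarAngle w - α)
        + s * Real.sin (polarAngle w - α)) := by
      intro w
      have h0 : w 0 = ‖w‖ * Real.cos (polarAngle w) := by
        conv_lhs => rw [← norm_smul_circlePt_polarAngle w]
        rfl
      have h1 : w 1 = ‖w‖ * Real.sin (polarAngle w) := by
        conv_lhs => rw [← norm_smul_circlePt_polarAngle w]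
        rfl
      have : ℓ w = (A α + C) * (Real.cos α * w 0 + Real.sin α * w 1)
          + s * (Real.cos α * w 1 - Real.sin α * w 0) := rfl
      rw [this, h0, h1, Real.cos_sub, Real.sin_sub]
      ring
    refine ⟨ℓ, by rw [hℓ]; simp [α], fun w => ?_⟩
    rw [hℓ]
    exact mul_le_mul_of_nonneg_left
      (trig_support hper hL hK (hAL α) hs hsup hC _) (norm_nonneg w)
  · have := (abs_le.1 (hAL (polarAngle q))).1
    exact mul_nonneg (norm_nonneg q) (by linarith)


/-! ### Periodic semiconvex primitives -/

theorem sub_chord_le_integral {P : ℝ → ℝ} (hP : Monotone P) (α t : ℝ) :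
    P α * (t - α) ≤ ∫ u in α..t, P u := by
  rcases le_total α t with h | h
  · have := intervalIntegral.integral_mono_on h (f := fun _ => P α) (g := P)
      (μ := MeasureTheory.volume) intervalIntegrable_const hP.intervalIntegrable (fun u hu => hP hu.1)
    rw [intervalIntegral.integral_const, smul_eq_mul] at this
    linarith
  · have := intervalIntegral.integral_mono_on h (f := P) (g := fun _ => P α)
      (μ := MeasureTheory.volume) hP.intervalIntegrable intervalIntegrable_const (fun u hu => hP hu.2)
    rw [intervalIntegral.integral_const, smul_eq_mul] at this
    rw [intervalIntegral.integral_symm]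
    linarith

theorem intervalIntegrable_mul_id (κ a b : ℝ) :
    IntervalIntegrable (fun u => κ * u) MeasureTheory.volume a b :=
  Continuous.intervalIntegrable (by fun_prop) a b

theorem intervalIntegrable_of_monotone_add {G : ℝ → ℝ} {κ : ℝ}
    (hmono : Monotone fun u => G u + κ * u) (a b : ℝ) :
    IntervalIntegrable G MeasureTheory.volume a b := by
  have h := (hmono.intervalIntegrable (μ := MeasureTheory.volume) (a := a) (b := b)).sub
    (intervalIntegrable_mul_id κ a b)
  refine h.congr (fun u _ => ?_)
  simp

/-- A `2π`-periodic primitive of a bounded function `G` for which `G u + κ u` is increasing is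
semiconvex, hence is up to a constant the angular part of a convex function. -/
theorem exists_convexOn_of_primitive {A G : ℝ → ℝ} (hper : Function.Periodic A (2 * Real.pi))
    {M κ : ℝ} (hκ : 0 ≤ κ) (hM : ∀ u, |G u| ≤ M) (hmono : Monotone fun u => G u + κ * u)
    (hA : ∀ s t, A t - A s = ∫ u in s..t, G u) :
    ∃ C₀ : ℝ, ∀ C, C₀ ≤ C →
      ConvexOn ℝ univ (fun q => ‖q‖ * (A (polarAngle q) + C)) ∧
        ∀ q : EuclideanSpace ℝ (Fin 2), 0 ≤ ‖q‖ * (A (polarAngle q) + C) := by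
  have hM0 : 0 ≤ M := (abs_nonneg _).trans (hM 0)
  have hpi := Real.pi_pos
  set L := |A 0| + M * (2 * Real.pi) + M with hL
  have hAL : ∀ α, |A α| ≤ L := by
    intro α
    obtain ⟨y, hy, e⟩ := hper.exists_mem_Ico₀ Real.two_pi_pos α
    rw [e]
    have h1 := intervalIntegral.norm_integral_le_of_norm_le_const (a := 0) (b := y) (f := G)
      (C := M) (fun u _ => hM u)
    rw [← hA, Real.norm_eq_abs, sub_zero, abs_of_nonneg hy.1] at h1
    have h2 : M * y ≤ M * (2 * Real.pi) := by have := hy.2.le; gcongr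
    have h3 := abs_add_le (A 0) (A y - A 0)
    rw [add_sub_cancel] at h3
    linarith
  have hsup : ∀ α, ∃ s, |s| ≤ L ∧ ∀ t, A α + s * (t - α) - κ / 2 * (t - α) ^ 2 ≤ A t := by
    intro α
    refine ⟨G α, (hM α).trans (by rw [hL]; have := abs_nonneg (A 0); nlinarith), fun t => ?_⟩
    have h1 := sub_chord_le_integral hmono α t
    have h2 : ∫ u in α..t, (G u + κ * u) = (A t - A α) + κ * ((t ^ 2 - α ^ 2) / 2) := by
      rw [intervalIntegral.integral_add (intervalIntegrable_of_monotone_add hmono α t)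
        (intervalIntegrable_mul_id κ α t), ← hA, intervalIntegral.integral_const_mul, integral_id]
    rw [h2] at h1
    nlinarith
  exact ⟨_, fun C hC => convexOn_norm_mul hper (by positivity) (by positivity) hAL hsup hC⟩

/-- The `2π`-periodic function equal to `p t - V * t / (2π)` on `[0, 2π)`. When `p` is increasing
and `V ≥ p (2π) - p 0`, adding `V * t / (2π)` on all of `ℝ` makes it increasing. -/
def periodize (p : ℝ → ℝ) (V t : ℝ) : ℝ :=
  p (2 * Real.pi * Int.fract (t / (2 * Real.pi))) - V * Int.fract (t / (2 * Real.pi))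

theorem periodize_periodic (p : ℝ → ℝ) (V : ℝ) :
    Function.Periodic (periodize p V) (2 * Real.pi) := by
  intro t
  have : (t + 2 * Real.pi) / (2 * Real.pi) = t / (2 * Real.pi) + 1 := by
    field_simp
  simp [periodize, this]

theorem two_pi_mul_fract_mem (t : ℝ) :
    2 * Real.pi * Int.fract (t / (2 * Real.pi)) ∈ Icc 0 (2 * Real.pi) := by
  have := Real.pi_pos
  have h1 := Int.fract_nonneg (t / (2 * Real.pi))
  have h2 := (Int.fract_lt_one (t / (2 * Real.pi))).le
  constructor <;> nlinarith

theorem abs_periodize_le {p : ℝ → ℝ} (hp : Monotone p) {V : ℝ} (hV : 0 ≤ V) (t : ℝ) :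
    |periodize p V t| ≤ |p 0| + |p (2 * Real.pi)| + V := by
  have hm := two_pi_mul_fract_mem t
  have h1 := Int.fract_nonneg (t / (2 * Real.pi))
  have h2 := (Int.fract_lt_one (t / (2 * Real.pi))).le
  have h3 := hp hm.1
  have h4 := hp hm.2
  have h5 : V * Int.fract (t / (2 * Real.pi)) ≤ V * 1 := by gcongr
  have h6 := mul_nonneg hV h1
  have := neg_abs_le (p 0)
  have := le_abs_self (p (2 * Real.pi))
  have := abs_nonneg (p 0)
  have := abs_nonneg (p (2 * Real.pi))
  rw [periodize, abs_le]
  constructor <;> linarith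

theorem monotone_periodize_add {p : ℝ → ℝ} (hp : Monotone p) {V : ℝ}
    (hV : p (2 * Real.pi) - p 0 ≤ V) :
    Monotone fun t => periodize p V t + V / (2 * Real.pi) * t := by
  have hpi := Real.pi_pos
  have hV0 : 0 ≤ V := by linarith [hp Real.two_pi_pos.le]
  have e : (fun t => periodize p V t + V / (2 * Real.pi) * t) = fun t =>
      p (2 * Real.pi * Int.fract (t / (2 * Real.pi))) + V * ⌊t / (2 * Real.pi)⌋ := by
    funext t
    have := Int.floor_add_fract (t / (2 * Real.pi))
    have h2 : V / (2 * Real.pi) * t = V * (t / (2 * Real.pi)) := by ring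
    rw [h2, periodize]
    linear_combination (-V) * this
  rw [e]
  intro x y hxy
  have hxy' : x / (2 * Real.pi) ≤ y / (2 * Real.pi) := by gcongr
  simp only
  rcases (Int.floor_mono hxy').eq_or_lt with h | h
  · rw [h]
    gcongr
    apply hp
    gcongr
    unfold Int.fract
    rw [h]
    linarith
  · have h1 : (⌊x / (2 * Real.pi)⌋ : ℝ) + 1 ≤ ⌊y / (2 * Real.pi)⌋ := by exact_mod_cast h
    have h2 := hp (two_pi_mul_fract_mem x).2
    have h3 := hp (two_pi_mul_fract_mem y).1
    nlinarith [mul_le_mul_of_nonneg_left h1 hV0]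

/-- A `2π`-periodic Lipschitz function whose derivative is, on `[0, 2π]`, a difference of
increasing functions is the difference of the angular parts of two convex functions. -/
theorem exists_angular_dc {Φ p q : ℝ → ℝ} {L : ℝ≥0} (hΦ : LipschitzWith L Φ)
    (hper : Function.Periodic Φ (2 * Real.pi)) (hp : Monotone p) (hq : Monotone q)
    (hd : ∀ t ∈ Icc 0 (2 * Real.pi), DifferentiableAt ℝ Φ t → deriv Φ t = p t - q t) :
    ∃ F G : EuclideanSpace ℝ (Fin 2) → ℝ, ConvexOn ℝ univ F ∧ ConvexOn ℝ univ G ∧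
      (∀ x, 0 ≤ F x) ∧ (∀ x, 0 ≤ G x) ∧ ∀ x, ‖x‖ * Φ (polarAngle x) = F x - G x := by
  have hpi := Real.pi_pos
  set V := max (p (2 * Real.pi) - p 0) (q (2 * Real.pi) - q 0) with hV
  have hV0 : 0 ≤ V := le_max_of_le_left (by linarith [hp Real.two_pi_pos.le])
  have mp := monotone_periodize_add hp (le_max_left _ _ : _ ≤ V)
  have mq := monotone_periodize_add hq (le_max_right _ _ : _ ≤ V)
  -- Subtracting the mean makes the primitive periodic.
  set c := (∫ u in (0 : ℝ)..(2 * Real.pi), periodize p V u) / (2 * Real.pi) with hc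
  set Gp : ℝ → ℝ := fun u => periodize p V u - c with hGp
  set Gq : ℝ → ℝ := fun u => periodize q V u - c with hGq
  have mp' : Monotone fun u => Gp u + V / (2 * Real.pi) * u := by
    intro x y h; have := mp h; simp only [hGp] at this ⊢; linarith
  have mq' : Monotone fun u => Gq u + V / (2 * Real.pi) * u := by
    intro x y h; have := mq h; simp only [hGq] at this ⊢; linarith
  have ip := intervalIntegrable_of_monotone_add mp'
  have iq := intervalIntegrable_of_monotone_add mq'
  have perGp : Function.Periodic Gp (2 * Real.pi) := fun u => by
    simp only [hGp, periodize_periodic p V u]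
  have zero : ∫ u in (0 : ℝ)..(0 + 2 * Real.pi), Gp u = 0 := by
    rw [zero_add, hGp, intervalIntegral.integral_sub (intervalIntegrable_of_monotone_add mp _ _)
      intervalIntegrable_const, intervalIntegral.integral_const, hc, smul_eq_mul]
    field_simp
    ring
  set A : ℝ → ℝ := fun t => ∫ u in (0 : ℝ)..t, Gp u with hA
  have hAint : ∀ s t, A t - A s = ∫ u in s..t, Gp u := fun s t =>
    intervalIntegral.integral_interval_sub_left (ip _ _) (ip _ _)
  have perA : Function.Periodic A (2 * Real.pi) := by
    intro t
    have h := hAint t (t + 2 * Real.pi)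
    rw [perGp.intervalIntegral_add_eq t 0, zero] at h
    linarith
  set B : ℝ → ℝ := fun t => A t - Φ t with hB
  have perB : Function.Periodic B (2 * Real.pi) := fun t => by
    simp only [hB, perA t, hper t]
  have deq : ∀ t, DifferentiableAt ℝ Φ t → Gp t - deriv Φ t = Gq t := by
    intro t ht
    set k : ℤ := ⌊t / (2 * Real.pi)⌋
    have e : 2 * Real.pi * Int.fract (t / (2 * Real.pi)) = t - k * (2 * Real.pi) := by
      unfold Int.fract
      field_simp
      rfl
    have hfun : (fun x => Φ (x + k * (2 * Real.pi))) = Φ := funext fun x => hper.int_mul k x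
    have hdiff : HasDerivAt Φ (deriv Φ t) (t - k * (2 * Real.pi)) := by
      have h : HasDerivAt Φ (deriv Φ t) (t - k * (2 * Real.pi) + k * (2 * Real.pi)) := by
        rw [sub_add_cancel]; exact ht.hasDerivAt
      have h2 := h.comp_add_const (t - k * (2 * Real.pi)) (k * (2 * Real.pi))
      rwa [hfun] at h2
    have h3 := hd _ (e ▸ two_pi_mul_fract_mem t) hdiff.differentiableAt
    rw [hdiff.deriv] at h3
    simp only [hGp, hGq, periodize]
    rw [e, h3]
    ring
  have hBint : ∀ s t, B t - B s = ∫ u in s..t, Gq u := by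
    intro s t
    have ac := (hΦ.lipschitzOnWith (s := uIcc s t)).absolutelyContinuousOnInterval
    have h1 := ac.integral_deriv_eq_sub
    have h2 : ∫ u in s..t, Gq u = ∫ u in s..t, (Gp u - deriv Φ u) := by
      apply intervalIntegral.integral_congr_ae
      filter_upwards [hΦ.ae_differentiableAt] with u hu _
      exact (deq u hu).symm
    rw [h2, intervalIntegral.integral_sub (ip _ _) ac.intervalIntegrable_deriv, ← hAint, h1]
    simp only [hB]
    ring
  have κ0 : 0 ≤ V / (2 * Real.pi) := by positivity
  have bnd : ∀ r : ℝ → ℝ, Monotone r →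
      ∀ u, |periodize r V u - c| ≤ |r 0| + |r (2 * Real.pi)| + V + |c| := fun r hr u =>
    (abs_sub _ _).trans (by linarith [abs_periodize_le hr hV0 u])
  obtain ⟨C₁, h₁⟩ := exists_convexOn_of_primitive perA κ0 (bnd p hp) mp' hAint
  obtain ⟨C₂, h₂⟩ := exists_convexOn_of_primitive perB κ0 (bnd q hq) mq' hBint
  obtain ⟨a₁, a₂⟩ := h₁ (max C₁ C₂) (le_max_left _ _)
  obtain ⟨b₁, b₂⟩ := h₂ (max C₁ C₂) (le_max_right _ _)
  refine ⟨_, _, a₁, b₁, a₂, b₂, fun x => ?_⟩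
  simp only [hB]
  ring


/-! ### Jordan decomposition of the derivative and conclusion -/

theorem derivVariation_mono (f : ℝ → ℝ) (a : ℝ) {x y : ℝ} (hxy : x ≤ y) :
    derivVariation f a x ≤ derivVariation f a y :=
  iSup_mono fun _ => iSup_mono fun _ => iSup_mono fun _ =>
    iSup_mono' fun h => ⟨fun i => ⟨⟨(h i).1.1, (h i).1.2.trans hxy⟩, (h i).2⟩, le_rfl⟩

/-- Appending a point to a chain of points of differentiability adds one jump to its sum. -/
theorem exists_chain_snoc (f : ℝ → ℝ) {a y : ℝ} (hay : a ≤ y) (hy : DifferentiableAt ℝ f y)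
    {N : ℕ} {t : Fin (N + 1) → ℝ} (ht : StrictMono t)
    (hm : ∀ i, t i ∈ Icc a y ∧ DifferentiableAt ℝ f (t i)) (hlast : t (Fin.last N) < y) :
    ∃ s : Fin (N + 1 + 1) → ℝ, StrictMono s ∧
      (∀ i, s i ∈ Icc a y ∧ DifferentiableAt ℝ f (s i)) ∧ s (Fin.last (N + 1)) = y ∧
      ∑ i : Fin (N + 1), ENNReal.ofReal ‖deriv f (s i.succ) - deriv f (s i.castSucc)‖ =
        ∑ i : Fin N, ENNReal.ofReal ‖deriv f (t i.succ) - deriv f (t i.castSucc)‖ +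
          ENNReal.ofReal ‖deriv f y - deriv f (t (Fin.last N))‖ := by
  refine ⟨Fin.snoc (α := fun _ => ℝ) t y, ?_, ?_, by simp, ?_⟩
  · rw [Fin.strictMono_iff_lt_succ]
    intro i
    induction i using Fin.lastCases with
    | last => simpa using hlast
    | cast i =>
      rw [Fin.succ_castSucc, Fin.snoc_castSucc, Fin.snoc_castSucc]
      exact ht Fin.castSucc_lt_succ
  · intro i
    induction i using Fin.lastCases with
    | last => simpa using ⟨hay, hy⟩
    | cast i => simpa using hm i
  · rw [Fin.sum_univ_castSucc]
    congr 1
    · refine Finset.sum_congr rfl fun i _ => ?_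
      rw [Fin.succ_castSucc, Fin.snoc_castSucc, Fin.snoc_castSucc]
    · simp

/-- Superadditivity: extending the interval from `x` to `y` increases the variation of the
derivative at least by the jump between `x` and `y`. -/
theorem derivVariation_add_le (f : ℝ → ℝ) {a x y : ℝ} (hax : a ≤ x) (hxy : x < y)
    (hx : DifferentiableAt ℝ f x) (hy : DifferentiableAt ℝ f y) :
    derivVariation f a x + ENNReal.ofReal ‖deriv f y - deriv f x‖ ≤ derivVariation f a y := by
  -- It suffices to bound chains ending exactly at `x`; these are extended by `y`.
  have last : ∀ (N : ℕ) (t : Fin (N + 1) → ℝ), StrictMono t →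
      (∀ i, t i ∈ Icc a x ∧ DifferentiableAt ℝ f (t i)) → t (Fin.last N) = x →
      ∑ i : Fin N, ENNReal.ofReal ‖deriv f (t i.succ) - deriv f (t i.castSucc)‖ +
        ENNReal.ofReal ‖deriv f y - deriv f x‖ ≤ derivVariation f a y := by
    intro N t ht hm hl
    obtain ⟨s, s₁, s₂, -, s₄⟩ := exists_chain_snoc f (hax.trans hxy.le) hy ht
      (fun i => ⟨⟨(hm i).1.1, (hm i).1.2.trans hxy.le⟩, (hm i).2⟩) (hl ▸ hxy)
    rw [← hl, ← s₄]
    exact le_iSup_of_le (N + 1) <| le_iSup_of_le s <| le_iSup_of_le s₁ <| le_iSup_of_le s₂ le_rfl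
  have single : ENNReal.ofReal ‖deriv f y - deriv f x‖ ≤ derivVariation f a y := by
    have : Subsingleton (Fin (0 + 1)) := inferInstanceAs (Subsingleton (Fin 1))
    simpa using last 0 (fun _ => x) (Subsingleton.strictMono _)
      (fun _ => ⟨⟨hax, le_rfl⟩, hx⟩) rfl
  have main : derivVariation f a x ≤
      derivVariation f a y - ENNReal.ofReal ‖deriv f y - deriv f x‖ := by
    refine iSup_le fun N => iSup_le fun t => iSup_le fun ht => iSup_le fun hm => ?_
    refine ENNReal.le_sub_of_add_le_right ENNReal.ofReal_ne_top ?_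
    rcases (hm (Fin.last N)).1.2.eq_or_lt with h | h
    · exact last N t ht hm h
    · obtain ⟨s, s₁, s₂, s₃, s₄⟩ := exists_chain_snoc f hax hx ht hm h
      refine le_trans ?_ (last (N + 1) s s₁ s₂ s₃)
      gcongr
      rw [s₄]
      exact le_self_add
  calc _ ≤ derivVariation f a y - ENNReal.ofReal ‖deriv f y - deriv f x‖ +
        ENNReal.ofReal ‖deriv f y - deriv f x‖ := by gcongr
    _ = _ := tsub_add_cancel_of_le single

/-- Jordan decomposition of the derivative, defined only at points of differentiability, of a
function with finite derivative variation. -/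
theorem exists_monotone_sub_of_derivVariation {f : ℝ → ℝ} {L : ℝ≥0} (hf : LipschitzWith L f)
    {a b : ℝ} (h : derivVariation f a b ≠ ⊤) :
    ∃ p q : ℝ → ℝ, Monotone p ∧ Monotone q ∧
      ∀ t ∈ Icc a b, DifferentiableAt ℝ f t → deriv f t = p t - q t := by
  -- `min t b` keeps the variation finite, so that `toReal` is meaningful.
  set p : ℝ → ℝ := fun t => (derivVariation f a (min t b)).toReal with hp
  have fin : ∀ t, derivVariation f a (min t b) ≠ ⊤ := fun t =>
    ne_top_of_le_ne_top h (derivVariation_mono f a (min_le_right _ _))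
  have mp : Monotone p := fun x y hxy =>
    ENNReal.toReal_mono (fin y) (derivVariation_mono f a (min_le_min_right b hxy))
  set S := {t | t ∈ Icc a b ∧ DifferentiableAt ℝ f t} with hS
  have mq : MonotoneOn (fun t => p t - deriv f t) S := by
    intro x hx y hy hxy
    rcases hxy.eq_or_lt with rfl | hlt
    · rfl
    have e := derivVariation_add_le f hx.1.1 hlt hx.2 hy.2
    have e' := ENNReal.toReal_mono (by simpa [min_eq_left hy.1.2] using fin y) e
    rw [ENNReal.toReal_add (by simpa [min_eq_left hx.1.2] using fin x) ENNReal.ofReal_ne_top,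
      ENNReal.toReal_ofReal (norm_nonneg _), Real.norm_eq_abs] at e'
    have := le_abs_self (deriv f y - deriv f x)
    simp only [hp, min_eq_left hx.1.2, min_eq_left hy.1.2]
    linarith
  have hL : ∀ t, |deriv f t| ≤ L := fun t => norm_deriv_le_of_lipschitz hf
  obtain ⟨q, hq, hqS⟩ := mq.exists_monotone_extension
    ⟨p a - L, by
      rintro _ ⟨t, ht, rfl⟩
      have := mp ht.1.1
      have := (abs_le.1 (hL t)).2
      simp only; linarith⟩
    ⟨p b + L, by
      rintro _ ⟨t, ht, rfl⟩
      have := mp ht.1.2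
      have := (abs_le.1 (hL t)).1
      simp only; linarith⟩
  refine ⟨p, q, mp, hq, fun t ht hd => ?_⟩
  have := hqS (show t ∈ S from ⟨ht, hd⟩)
  simp only at this
  linarith

theorem lipschitzWith_circlePt : LipschitzWith 2 circlePt := by
  refine LipschitzWith.of_dist_le_mul fun s t => ?_
  rw [dist_eq_norm, Real.dist_eq]
  refine (norm_le_abs_add_abs _).trans ?_
  have h₁ := Real.abs_cos_sub_cos_le s t
  have h₂ := Real.abs_sin_sub_sin_le s t
  simp only [PiLp.sub_apply, circlePt_zero, circlePt_one, NNReal.coe_ofNat]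
  linarith

theorem circlePt_periodic : Function.Periodic circlePt (2 * Real.pi) := by
  intro t
  simp [circlePt]

/-- `N (F - G) = ((N + F) ^ 2 + G ^ 2) / 2 - ((N + G) ^ 2 + F ^ 2) / 2`, and squares of nonnegative
convex functions are convex. -/
theorem dc_mul_sub {E : Type*} [AddCommGroup E] [Module ℝ E] {N F G : E → ℝ}
    (hN : ConvexOn ℝ univ N) (hF : ConvexOn ℝ univ F) (hG : ConvexOn ℝ univ G)
    (N0 : ∀ x, 0 ≤ N x) (F0 : ∀ x, 0 ≤ F x) (G0 : ∀ x, 0 ≤ G x) :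
    ∃ f₁ f₂ : E → ℝ, ConvexOn ℝ univ f₁ ∧ ConvexOn ℝ univ f₂ ∧
      (fun x => N x * (F x - G x)) = f₁ - f₂ := by
  refine ⟨(1 / 2 : ℝ) • ((N + F) ^ 2 + G ^ 2), (1 / 2 : ℝ) • ((N + G) ^ 2 + F ^ 2), ?_, ?_, ?_⟩
  · exact (((hN.add hF).pow (fun x _ => add_nonneg (N0 x) (F0 x)) 2).add
      (hG.pow (fun x _ => G0 x) 2)).smul (by norm_num)
  · exact (((hN.add hG).pow (fun x _ => add_nonneg (N0 x) (G0 x)) 2).add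
      (hF.pow (fun x _ => F0 x) 2)).smul (by norm_num)
  · funext x
    simp only [Pi.sub_apply, Pi.smul_apply, Pi.add_apply, Pi.pow_apply, smul_eq_mul]
    ring

/-- a function `φ : ℝ² → ℝ` that is positively homogeneous of degree `m` and
Lipschitz on the closed unit ball is a difference of convex functions iff the variation of
`Φ'` on `[0, 2π]` is bounded, where `Φ(t) = φ(cos t, sin t)`. -/
theorem dc_iff_bounded_derivVariation_of_posHomog
    (m : ℕ) (hm : 0 < m) (φ : EuclideanSpace ℝ (Fin 2) → ℝ)
    (hhom : ∀ l : ℝ, 0 < l → ∀ q, φ (l • q) = l ^ m * φ q)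
    (hlip : ∃ L : ℝ≥0, LipschitzOnWith L φ (Metric.closedBall 0 1)) :
    (∃ f₁ f₂ : EuclideanSpace ℝ (Fin 2) → ℝ,
        ConvexOn ℝ Set.univ f₁ ∧ ConvexOn ℝ Set.univ f₂ ∧ φ = f₁ - f₂) ↔
      (∃ c : ℝ, 0 < c ∧
        derivVariation (fun t => φ (circlePt t)) 0 (2 * Real.pi) < ENNReal.ofReal c) := by
  constructor
  · rintro ⟨f₁, f₂, h₁, h₂, rfl⟩
    obtain ⟨K₁, k₁⟩ := exists_convexOn_comp_circlePt h₁
    obtain ⟨K₂, k₂⟩ := exists_convexOn_comp_circlePt h₂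
    obtain ⟨C, hC⟩ := derivVariation_sub_le (k₁ (max K₁ K₂) (le_max_left _ _))
      (k₂ (max K₁ K₂) (le_max_right _ _)) (Φ := fun t => (f₁ - f₂) (circlePt t))
      (fun t => by simp) 0 (2 * Real.pi)
    refine ⟨max C 0 + 1, by positivity, hC.trans_lt ?_⟩
    rw [ENNReal.ofReal_lt_ofReal_iff (by positivity)]
    linarith [le_max_left C 0]
  · rintro ⟨c, -, hc⟩
    obtain ⟨L, hL⟩ := hlip
    have hΦ : LipschitzWith (L * 2) fun t => φ (circlePt t) := by
      rw [← lipschitzOnWith_univ]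
      exact hL.comp lipschitzWith_circlePt.lipschitzOnWith
        (fun t _ => by simp [norm_circlePt])
    obtain ⟨p, q, hp, hq, hpq⟩ := exists_monotone_sub_of_derivVariation hΦ hc.ne_top
    obtain ⟨F, G, hF, hG, F0, G0, hFG⟩ := exists_angular_dc hΦ
      (circlePt_periodic.comp φ) hp hq hpq
    obtain ⟨f₁, f₂, h₁, h₂, e⟩ := dc_mul_sub
      ((convexOn_norm (E := EuclideanSpace ℝ (Fin 2)) convex_univ).pow
        (fun x _ => norm_nonneg x) (m - 1)) hF hG
      (fun x => pow_nonneg (norm_nonneg x) _) F0 G0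
    refine ⟨f₁, f₂, h₁, h₂, ?_⟩
    rw [← e]
    funext x
    simp only [Pi.pow_apply]
    rw [← hFG, ← mul_assoc, ← pow_succ, Nat.sub_add_cancel hm]
    rcases eq_or_ne x 0 with rfl | hx
    · have h := hhom 2 two_pos 0
      -- Homogeneity with factor `2` forces `φ 0 = 0`.
      rw [smul_zero] at h
      have h2 : (1 : ℝ) < 2 ^ m := one_lt_pow₀ (by norm_num) hm.ne'
      have : (2 ^ m - 1 : ℝ) * φ 0 = 0 := by linarith
      rw [norm_zero, zero_pow hm.ne', zero_mul]
      exact (mul_eq_zero.1 this).resolve_left (by linarith)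
    · rw [← hhom _ (norm_pos_iff.2 hx), norm_smul_circlePt_polarAngle]
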